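/- Let α ∈ (0, π/4), s ∈ [0, π] and t ∈ [π, 2π). Then −sin²α · cos(s − t/2) = cos²α · cos(t/2) if and only if t = π + 2·arctan( sin s / (cos s + cot²α) ). (Note that cot²α > 1 > −cos s, so the denominator cos s + cot²α is positive.) -/

import Mathlib

/-!
Set `u = t / 2 - π / 2`, which lies in the principal branch `(-π/2, π/2)` of `tan`. Since
`cos (t / 2) = -sin u` and `sin (t / 2) = cos u`, the switching relation divided by `sin² α` is
`sin u * (cos s + cot² α) = sin s * cos u`, and solving for `tan u` gives the arctangent formula.
-/

open Real

lemma eq_arctan_div_iff {u p q : ℝ} (hu : u ∈ Set.Ioo (-(π / 2)) (π / 2)) (hq : q ≠ 0) :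
    u = arctan (p / q) ↔ sin u * q = p * cos u := by
  have hcos : cos u ≠ 0 := (cos_pos_of_mem_Ioo hu).ne'
  rw [← div_eq_div_iff hcos hq, ← tan_eq_sin_div_cos]
  constructor
  · rintro rfl
    exact tan_arctan _
  · intro htan
    rw [← htan, arctan_tan hu.1 hu.2]

lemma neg_mul_cos_sub_eq_mul_cos_iff {a : ℝ} (ha : a ≠ 0) (b s x : ℝ) :
    -a * cos (s - x) = b * cos x ↔
      sin (x - π / 2) * (cos s + b / a) = sin s * cos (x - π / 2) := by
  rw [sin_sub_pi_div_two, cos_sub_pi_div_two, cos_sub]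
  field_simp
  constructor <;> intro h <;> linear_combination h

lemma neg_mul_cos_sub_eq_mul_cos_iff_eq_arctan {a b s x : ℝ} (ha : a ≠ 0)
    (hden : cos s + b / a ≠ 0) (hx : x ∈ Set.Ioo 0 π) :
    -a * cos (s - x) = b * cos x ↔ x = π / 2 + arctan (sin s / (cos s + b / a)) := by
  have hu : x - π / 2 ∈ Set.Ioo (-(π / 2)) (π / 2) := ⟨by linarith [hx.1], by linarith [hx.2]⟩
  rw [neg_mul_cos_sub_eq_mul_cos_iff ha, ← eq_arctan_div_iff hu hden, sub_eq_iff_eq_add']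

lemma sin_sq_lt_cos_sq {α : ℝ} (hα : α ∈ Set.Ioo (-(π / 4)) (π / 4)) :
    sin α ^ 2 < cos α ^ 2 := by
  have hcos : 0 < cos (2 * α) :=
    cos_pos_of_mem_Ioo ⟨by linarith [hα.1], by linarith [hα.2]⟩
  rwa [cos_two_mul', sub_pos] at hcos

lemma cos_add_cot_sq_pos {α : ℝ} (hsin : sin α ≠ 0) (hlt : sin α ^ 2 < cos α ^ 2) (s : ℝ) :
    0 < cos s + (cos α / sin α) ^ 2 := by
  have hcot : 1 < (cos α / sin α) ^ 2 := by
    rwa [div_pow, one_lt_div (by positivity)]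
  linarith [neg_one_le_cos s]

theorem switching_relation_general {α s t : ℝ} (hsin : sin α ≠ 0)
    (hden : cos s + (cos α / sin α) ^ 2 ≠ 0) (ht : t ∈ Set.Ioo 0 (2 * π)) :
    -sin α ^ 2 * cos (s - t / 2) = cos α ^ 2 * cos (t / 2) ↔
      t = π + 2 * arctan (sin s / (cos s + (cos α / sin α) ^ 2)) := by
  have ht_half : t / 2 ∈ Set.Ioo 0 π := ⟨by linarith [ht.1], by linarith [ht.2]⟩
  rw [div_pow] at hden ⊢
  rw [neg_mul_cos_sub_eq_mul_cos_iff_eq_arctan (pow_ne_zero 2 hsin) hden ht_half]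
  constructor <;> intro h <;> linarith

/-- For `α ∈ (0,π/4)`, `s ∈ [0,π]` and `t ∈ [π,2π)`, the switching relation
`−sin²α·cos(s − t/2) = cos²α·cos(t/2)` holds iff
`t = π + 2·arctan(sin s/(cos s + cot²α))`. -/
theorem switching_relation (α s t : ℝ) (hα : α ∈ Set.Ioo 0 (π / 4))
    (hs : s ∈ Set.Icc 0 π) (ht : t ∈ Set.Ico π (2 * π)) :
    -Real.sin α ^ 2 * Real.cos (s - t / 2) = Real.cos α ^ 2 * Real.cos (t / 2) ↔
    t = π + 2 * Real.arctan (Real.sin s /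
      (Real.cos s + (Real.cos α / Real.sin α) ^ 2)) := by
  have hsin : sin α ≠ 0 := (sin_pos_of_pos_of_lt_pi hα.1 (by linarith [hα.2, pi_pos])).ne'
  have hden := cos_add_cot_sq_pos hsin (sin_sq_lt_cos_sq ⟨by linarith [hα.1, pi_pos], hα.2⟩) s
  exact switching_relation_general hsin hden.ne' ⟨pi_pos.trans_le ht.1, ht.2⟩
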